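/- arXiv:2407.02601 — 7 statements merged into one kernel-verified Lean document; each statement's English description precedes it below -/
import Mathlib

section
/- Let U be a finite set and f : Finset U → ℝ be monotone and submodular. Then for all S, T ⊆ U one has f(T) ≤ f(S) + ∑_{o ∈ T \ S} (f(S ∪ {o}) − f(S)). -/
section Submodular

variable {α M : Type*} [DecidableEq α] [AddCommGroup M] [PartialOrder M] {f : Finset α → M}

/-- Submodularity of a set function, encoded as diminishing returns: the gain from adding a new
element does not increase as the set grows. In this form it bounds the gain from adding many
elements to a set by the sum of their individual gains. -/
def Submodular (f : Finset α → M) : Prop :=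
  ∀ ⦃X Y : Finset α⦄, X ⊆ Y → ∀ ⦃x : α⦄, x ∉ Y → f (insert x Y) - f Y ≤ f (insert x X) - f X

variable [IsOrderedAddMonoid M]

theorem Submodular.apply_union_le_add_sum (hf : Submodular f) (S A : Finset α) :
    f (S ∪ A) ≤ f S + ∑ a ∈ A, (f (insert a S) - f S) := by
  induction A using Finset.induction_on with
  | empty => simp
  | insert a A ha ih =>
    have gain_le : f (insert a (S ∪ A)) - f (S ∪ A) ≤ f (insert a S) - f S := by
      by_cases haS : a ∈ S
      · simp [haS]
      · exact hf Finset.subset_union_left (Finset.notMem_union.mpr ⟨haS, ha⟩)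
    calc
      f (S ∪ insert a A) = f (S ∪ A) + (f (insert a (S ∪ A)) - f (S ∪ A)) := by
        rw [Finset.union_insert, add_sub_cancel]
      _ ≤ (f S + ∑ b ∈ A, (f (insert b S) - f S)) + (f (insert a S) - f S) :=
        add_le_add ih gain_le
      _ = f S + ∑ b ∈ insert a A, (f (insert b S) - f S) := by
        rw [Finset.sum_insert ha, add_assoc, add_comm (∑ b ∈ A, _)]

theorem monotone_submodular_marginal_bound_general (hmono : Monotone f) (hsub : Submodular f)
    (S T : Finset α) : f T ≤ f S + ∑ o ∈ T \ S, (f (insert o S) - f S) :=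
  calc
    f T ≤ f (S ∪ T) := hmono Finset.subset_union_right
    _ = f (S ∪ T \ S) := by rw [Finset.union_sdiff_self_eq_union]
    _ ≤ f S + ∑ o ∈ T \ S, (f (insert o S) - f S) := hsub.apply_union_le_add_sum S (T \ S)

end Submodular

/-- For a monotone submodular function `f` and any sets `S, T`,
`f T ≤ f S + ∑_{o ∈ T \ S} (f (S ∪ {o}) - f S)`. -/
theorem monotone_submodular_marginal_bound
    {U : Type*} [Fintype U] [DecidableEq U]
    (f : Finset U → ℝ)
    (hmono : ∀ X Y : Finset U, X ⊆ Y → f X ≤ f Y)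
    (hsub : ∀ X Y : Finset U, X ⊆ Y → ∀ x ∉ Y,
      f (insert x X) - f X ≥ f (insert x Y) - f Y)
    (S T : Finset U) :
    f T ≤ f S + ∑ o ∈ T \ S, (f (insert o S) - f S) :=
  monotone_submodular_marginal_bound_general hmono hsub S T
end

section
/- Let U be a nonempty finite set, f : Finset U → ℝ monotone and submodular, κ ≥ 1 a natural number, OPT ⊆ U with |OPT| ≤ κ, ε' ≥ 0, S ⊆ U, and a ∈ U an element satisfying Δf(S,a) ≥ max_{x ∈ U} Δf(S,x) − ε'. Then f(S ∪ {a}) ≥ f(S) + (f(OPT) − f(S))/κ − ε'. -/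
/-!
Adding the elements of `OPT` to `S` one at a time, submodularity bounds each increment of `f` by the
marginal gain over `S` itself, so `f OPT ≤ f (S ∪ OPT) ≤ f S + ∑ x ∈ OPT, Δf(S, x)`. Each of these
at most `κ` gains is bounded by `Δf(S, a) + ε'`, which is nonnegative by monotonicity, so the sum is
at most `κ (Δf(S, a) + ε')`.
-/

section OrderedGroup

variable {U G : Type*} [DecidableEq U] [AddCommGroup G]

/-- The marginal gain `Δf(S, x)` of adding the element `x` to `S`. The element `x` may already
lie in `S`, in which case the gain is zero. -/
def marginalGain (f : Finset U → G) (S : Finset U) (x : U) : G :=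
  f (insert x S) - f S

theorem marginalGain_of_mem (f : Finset U → G) {S : Finset U} {x : U} (hx : x ∈ S) :
    marginalGain f S x = 0 := by
  rw [marginalGain, Finset.insert_eq_of_mem hx, sub_self]

variable [PartialOrder G]

/-- Submodularity of a set function, in its diminishing-returns form: the marginal gain of a new
element does not increase when the set grows. -/
def IsSubmodular (f : Finset U → G) : Prop :=
  ∀ ⦃X Y : Finset U⦄, X ⊆ Y → ∀ x ∉ Y, marginalGain f Y x ≤ marginalGain f X x

variable {f : Finset U → G}

theorem IsSubmodular.marginalGain_union_le (hsub : IsSubmodular f) (S : Finset U)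
    {T : Finset U} {x : U} (hx : x ∉ T) :
    marginalGain f (S ∪ T) x ≤ marginalGain f S x := by
  by_cases hxS : x ∈ S
  · rw [marginalGain_of_mem f hxS, marginalGain_of_mem f (Finset.mem_union_left T hxS)]
  · exact hsub Finset.subset_union_left x (by simp [hxS, hx])

variable [IsOrderedAddMonoid G]

theorem marginalGain_nonneg (hmono : Monotone f) (S : Finset U) (x : U) :
    0 ≤ marginalGain f S x :=
  sub_nonneg.2 (hmono (Finset.subset_insert x S))

namespace IsSubmodular

theorem union_sub_le_sum_marginalGain (hsub : IsSubmodular f) (S T : Finset U) :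
    f (S ∪ T) - f S ≤ ∑ x ∈ T, marginalGain f S x := by
  induction T using Finset.induction_on with
  | empty => simp
  | insert x T hx ih =>
    calc f (S ∪ insert x T) - f S
        = marginalGain f (S ∪ T) x + (f (S ∪ T) - f S) := by
          rw [marginalGain, Finset.union_insert, sub_add_sub_cancel]
      _ ≤ marginalGain f S x + ∑ y ∈ T, marginalGain f S y :=
          add_le_add (hsub.marginalGain_union_le S hx) ih
      _ = ∑ y ∈ insert x T, marginalGain f S y := (Finset.sum_insert hx).symm

theorem sub_le_sum_marginalGain (hsub : IsSubmodular f) (hmono : Monotone f) (S T : Finset U) :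
    f T - f S ≤ ∑ x ∈ T, marginalGain f S x :=
  (sub_le_sub_right (hmono Finset.subset_union_right) _).trans
    (hsub.union_sub_le_sum_marginalGain S T)

theorem sub_le_nsmul (hsub : IsSubmodular f) (hmono : Monotone f) {S T : Finset U} {k : ℕ}
    (hT : T.card ≤ k) {M : G} (hM : 0 ≤ M) (hgain : ∀ x ∈ T, marginalGain f S x ≤ M) :
    f T - f S ≤ k • M :=
  calc f T - f S ≤ ∑ x ∈ T, marginalGain f S x := hsub.sub_le_sum_marginalGain hmono S T
    _ ≤ T.card • M := Finset.sum_le_card_nsmul T _ M hgain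
    _ ≤ k • M := nsmul_le_nsmul_left hM hT

end IsSubmodular

end OrderedGroup

theorem greedy_step_gain_general {U K : Type*} [DecidableEq U]
    [Field K] [LinearOrder K] [IsStrictOrderedRing K]
    {f : Finset U → K} (hmono : Monotone f) (hsub : IsSubmodular f)
    {κ : ℕ} (hκ : 1 ≤ κ) {OPT : Finset U} (hOPT : OPT.card ≤ κ)
    {ε' : K} (hε' : 0 ≤ ε') {S : Finset U} {a : U}
    (ha : ∀ x ∈ OPT, marginalGain f S x - ε' ≤ marginalGain f S a) :
    f S + (f OPT - f S) / κ - ε' ≤ f (insert a S) := by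
  have hκ_pos : (0 : K) < κ := Nat.cast_pos.2 hκ
  have total : f OPT - f S ≤ κ • (marginalGain f S a + ε') :=
    hsub.sub_le_nsmul hmono hOPT (add_nonneg (marginalGain_nonneg hmono S a) hε')
      fun x hx => sub_le_iff_le_add.1 (ha x hx)
  have average : (f OPT - f S) / κ ≤ marginalGain f S a + ε' := by
    rwa [div_le_iff₀' hκ_pos, ← nsmul_eq_mul]
  rw [marginalGain] at average
  linarith

/-- If `a` has marginal gain within `ε'` of the maximum marginal gain over
all elements, then `f (S ∪ {a}) ≥ f S + (f OPT - f S)/κ - ε'`. -/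
theorem greedy_step_gain
    {U : Type*} [Fintype U] [DecidableEq U] [Nonempty U]
    (f : Finset U → ℝ)
    (hmono : ∀ X Y : Finset U, X ⊆ Y → f X ≤ f Y)
    (hsub : ∀ X Y : Finset U, X ⊆ Y → ∀ x ∉ Y,
      f (insert x X) - f X ≥ f (insert x Y) - f Y)
    (κ : ℕ) (hκ : 1 ≤ κ)
    (OPT : Finset U) (hOPT : OPT.card ≤ κ)
    (ε' : ℝ) (hε' : 0 ≤ ε')
    (S : Finset U) (a : U)
    (ha : f (insert a S) - f S ≥
      Finset.univ.sup' Finset.univ_nonempty (fun x => f (insert x S) - f S) - ε') :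
    f (insert a S) ≥ f S + (f OPT - f S) / κ - ε' := by
  refine greedy_step_gain_general hmono hsub hκ hOPT hε' fun x _ => le_trans ?_ ha
  exact sub_le_sub_right (Finset.le_sup' (marginalGain f S) (Finset.mem_univ x)) ε'
end

section
/- Let g : ℕ → ℝ satisfy g(0) = 0, let c ∈ ℝ with 0 < c ≤ 1, let V, E ∈ ℝ, and let κ be a natural number. If g(i+1) ≥ c·V + (1 − c)·g(i) − E for all i < κ, then g(κ) ≥ (1 − (1 − c)^κ) · (V − E/c). -/
theorem pow_mul_add_geom_sum_mul_le {R : Type*} [Semiring R] [PartialOrder R] [IsOrderedRing R]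
    {u : ℕ → R} {r b : R} (hr : 0 ≤ r) (n : ℕ) (hu : ∀ i < n, r * u i + b ≤ u (i + 1)) :
    r ^ n * u 0 + (∑ i ∈ Finset.range n, r ^ i) * b ≤ u n := by
  induction n with
  | zero => simp
  | succ n ih =>
    have bound_n : r ^ n * u 0 + (∑ i ∈ Finset.range n, r ^ i) * b ≤ u n :=
      ih fun i hi => hu i (hi.trans n.lt_succ_self)
    calc r ^ (n + 1) * u 0 + (∑ i ∈ Finset.range (n + 1), r ^ i) * b
        = r * (r ^ n * u 0 + (∑ i ∈ Finset.range n, r ^ i) * b) + b := by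
          rw [geom_sum_succ, pow_succ']
          noncomm_ring
      _ ≤ r * u n + b := by gcongr
      _ ≤ u (n + 1) := hu n n.lt_succ_self

theorem greedy_recursion_bound_general {K : Type*} [Field K] [PartialOrder K] [IsOrderedRing K]
    {g : ℕ → K} {c : K} (hc0 : c ≠ 0) (hc1 : c ≤ 1) (V E : K) (κ : ℕ)
    (hstep : ∀ i < κ, c * V + (1 - c) * g i - E ≤ g (i + 1)) :
    (1 - c) ^ κ * g 0 + (1 - (1 - c) ^ κ) * (V - E / c) ≤ g κ := by
  have geom_sum : (∑ i ∈ Finset.range κ, (1 - c) ^ i) * c = 1 - (1 - c) ^ κ := by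
    simpa only [sub_sub_cancel] using geom_sum_mul_neg (1 - c) κ
  have affine_step : ∀ i < κ, (1 - c) * g i + (c * V - E) ≤ g (i + 1) := fun i hi =>
    (by ring : (1 - c) * g i + (c * V - E) = c * V + (1 - c) * g i - E).trans_le (hstep i hi)
  calc (1 - c) ^ κ * g 0 + (1 - (1 - c) ^ κ) * (V - E / c)
      = (1 - c) ^ κ * g 0 + (∑ i ∈ Finset.range κ, (1 - c) ^ i) * (c * V - E) := by
        rw [← geom_sum, mul_assoc, mul_sub, mul_div_cancel₀ E hc0]
    _ ≤ g κ := pow_mul_add_geom_sum_mul_le (sub_nonneg.mpr hc1) κ affine_step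

/-- Real-number recursion underlying the greedy approximation guarantee:
if `g 0 = 0` and each step satisfies `g (i+1) ≥ c·V + (1-c)·g i - E`, then
`g κ ≥ (1 - (1-c)^κ) · (V - E/c)`. -/
theorem greedy_recursion_bound
    (g : ℕ → ℝ) (hg0 : g 0 = 0)
    (c : ℝ) (hc0 : 0 < c) (hc1 : c ≤ 1)
    (V E : ℝ) (κ : ℕ)
    (hstep : ∀ i < κ, g (i + 1) ≥ c * V + (1 - c) * g i - E) :
    g κ ≥ (1 - (1 - c) ^ κ) * (V - E / c) := by
  simpa only [hg0, mul_zero, zero_add] using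
    greedy_recursion_bound_general hc0.ne' hc1 V E κ hstep
end

section
/- Let U be a finite set, f : Finset U → ℝ monotone and submodular with f(∅) = 0, κ ≥ 1 a natural number, OPT ⊆ U with |OPT| ≤ κ, α ∈ [0,1), and ε ≥ 0. Suppose S_0 = ∅ and S_0 ⊆ S_1 ⊆ ... ⊆ S_κ ⊆ U is a chain of sets satisfying f(S_{i+1}) ≥ ((1 − α)/κ)·f(OPT) + (1 − (1 − α)/κ)·f(S_i) − 2ε for all i < κ. Then f(S_κ) ≥ (1 − e^{−1} − α) · f(OPT) − 2κε. -/
/-!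
Put `q = 1 - (1 - α) / κ`. Each step multiplies the gap `f OPT - f (S i)` by at most `q`, up to an
additive error `2ε` which later steps do not amplify because `0 ≤ q ≤ 1`. After `κ` steps the gap
has shrunk by the factor `q ^ κ ≤ e^(α - 1)`, and `exp` is `1`-Lipschitz on `(-∞, 0]`, so this
factor is at most `e⁻¹ + α`.
-/

lemma le_pow_mul_add_natCast_mul {R : Type*} [CommSemiring R] [PartialOrder R] [IsOrderedRing R]
    {u : ℕ → R} {q b : R} (hq0 : 0 ≤ q) (hq1 : q ≤ 1) (hb : 0 ≤ b) (n : ℕ)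
    (hu : ∀ i < n, u (i + 1) ≤ q * u i + b) :
    u n ≤ q ^ n * u 0 + n * b := by
  have hmono : Monotone fun x : R ↦ q * x + b := fun x y hxy ↦ by
    dsimp only
    gcongr
  refine hmono.seq_le_seq (y := fun i ↦ q ^ i * u 0 + i * b) n (by simp) hu fun i _ ↦ ?_
  calc q * (q ^ i * u 0 + i * b) + b
      = q ^ (i + 1) * u 0 + (q * (i * b) + b) := by ring
    _ ≤ q ^ (i + 1) * u 0 + (i * b + b) := by
        have hib : 0 ≤ i * b := mul_nonneg i.cast_nonneg hb
        exact add_le_add_right (add_le_add_left (mul_le_of_le_one_left hib hq1) b) _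
    _ = q ^ (i + 1) * u 0 + (i + 1 : ℕ) * b := by push_cast; ring

lemma exp_sub_exp_le_sub {x y : ℝ} (hxy : x ≤ y) (hy : y ≤ 0) :
    Real.exp y - Real.exp x ≤ y - x :=
  calc Real.exp y - Real.exp x
      = Real.exp y * (1 - Real.exp (-(y - x))) := by
        rw [mul_sub, mul_one, ← Real.exp_add]
        ring_nf
    _ ≤ Real.exp y * (y - x) :=
        mul_le_mul_of_nonneg_left (sub_le_comm.mp (Real.one_sub_le_exp_neg (y - x)))
          (Real.exp_nonneg y)
    _ ≤ y - x := mul_le_of_le_one_left (sub_nonneg.mpr hxy) (Real.exp_le_one_iff.mpr hy)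

lemma one_sub_one_sub_div_pow_le_exp_neg_one_add {n : ℕ} (hn : 1 ≤ n)
    {α : ℝ} (hα0 : 0 ≤ α) (hα1 : α ≤ 1) :
    (1 - (1 - α) / n) ^ n ≤ Real.exp (-1) + α := by
  have hn' : (1 : ℝ) ≤ n := mod_cast hn
  have hpow : (1 - (1 - α) / n) ^ n ≤ Real.exp (-(1 - α)) :=
    Real.one_sub_div_pow_le_exp_neg (by linarith)
  have hexp : Real.exp (-(1 - α)) - Real.exp (-1) ≤ -(1 - α) - -1 :=
    exp_sub_exp_le_sub (by linarith) (by linarith)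
  linarith

theorem threshold_greedy_full_budget_general
    {κ : ℕ} (hκ : 1 ≤ κ) {α ε F : ℝ} (hα0 : 0 ≤ α) (hα1 : α ≤ 1) (hε : 0 ≤ ε)
    {a : ℕ → ℝ} (ha0 : a 0 ≤ F)
    (hstep : ∀ i < κ, a (i + 1) ≥ ((1 - α) / κ) * F + (1 - (1 - α) / κ) * a i - 2 * ε) :
    F - a κ ≤ (Real.exp (-1) + α) * (F - a 0) + 2 * κ * ε := by
  have hκ' : (1 : ℝ) ≤ κ := mod_cast hκ
  have hq0 : 0 ≤ 1 - (1 - α) / κ := sub_nonneg.mpr (div_le_one_of_le₀ (by linarith) (by linarith))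
  have hq1 : 1 - (1 - α) / κ ≤ 1 := sub_le_self 1 (div_nonneg (by linarith) (by linarith))
  have hgap : ∀ i < κ, F - a (i + 1) ≤ (1 - (1 - α) / κ) * (F - a i) + 2 * ε := fun i hi ↦ by
    linarith [hstep i hi]
  calc F - a κ
      ≤ (1 - (1 - α) / κ) ^ κ * (F - a 0) + κ * (2 * ε) :=
        le_pow_mul_add_natCast_mul (u := fun i ↦ F - a i) hq0 hq1 (by positivity) κ hgap
    _ ≤ (Real.exp (-1) + α) * (F - a 0) + κ * (2 * ε) := by
        gcongr
        exact one_sub_one_sub_div_pow_le_exp_neg_one_add hκ hα0 hα1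
    _ = (Real.exp (-1) + α) * (F - a 0) + 2 * κ * ε := by ring

/-- Deterministic full-budget case of the threshold greedy guarantee:
a chain `∅ = S 0 ⊆ S 1 ⊆ ... ⊆ S κ` in which each step satisfies
`f (S (i+1)) ≥ ((1-α)/κ)·f OPT + (1 - (1-α)/κ)·f (S i) - 2ε` yields
`f (S κ) ≥ (1 - e⁻¹ - α)·f OPT - 2κε`. -/
theorem threshold_greedy_full_budget
    {U : Type*} [Fintype U] [DecidableEq U]
    (f : Finset U → ℝ)
    (hmono : ∀ X Y : Finset U, X ⊆ Y → f X ≤ f Y)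
    (hsub : ∀ X Y : Finset U, X ⊆ Y → ∀ x ∉ Y,
      f (insert x X) - f X ≥ f (insert x Y) - f Y)
    (hf0 : f ∅ = 0)
    (κ : ℕ) (hκ : 1 ≤ κ)
    (OPT : Finset U) (hOPT : OPT.card ≤ κ)
    (α : ℝ) (hα0 : 0 ≤ α) (hα1 : α < 1)
    (ε : ℝ) (hε : 0 ≤ ε)
    (S : ℕ → Finset U)
    (hS0 : S 0 = ∅)
    (hchain : ∀ i < κ, S i ⊆ S (i + 1))
    (hstep : ∀ i < κ, f (S (i + 1)) ≥
      ((1 - α) / κ) * f OPT + (1 - (1 - α) / κ) * f (S i) - 2 * ε) :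
    f (S κ) ≥ (1 - Real.exp (-1) - α) * f OPT - 2 * κ * ε := by
  have hgap := threshold_greedy_full_budget_general (a := fun i ↦ f (S i)) hκ hα0 hα1.le hε
    (hmono _ _ (hS0 ▸ OPT.empty_subset)) hstep
  simp only [hS0, hf0] at hgap
  linarith
end

section
/- Let x, a, b ∈ ℝ with x > 0, a > 0, and b > 0. If x ≤ a + b·log x, then x ≤ 2a + 2b·log b. -/
/-!
By concavity, the graph of `log` lies below its tangent line at any `c > 0`. Bounding `log x` by it
turns the hypothesis into a linear inequality in `x`. At `c = 2 * b` the term of `b * log x` linear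
in `x` is exactly `x / 2`, which is absorbed into the left-hand side, and `log 2 ≤ 1` bounds the
remaining constant `log (2 * b) - 1` by `log b`.
-/

lemma log_le_log_add_div_sub_one {x c : ℝ} (hx : 0 < x) (hc : 0 < c) :
    Real.log x ≤ Real.log c + x / c - 1 := by
  have log_ratio_le : Real.log (x / c) ≤ x / c - 1 :=
    Real.log_le_sub_one_of_pos (div_pos hx hc)
  rw [Real.log_div hx.ne' hc.ne'] at log_ratio_le
  linarith

lemma one_sub_div_mul_le_of_le_add_mul_log {x a b c : ℝ} (hx : 0 < x) (hb : 0 ≤ b) (hc : 0 < c)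
    (h : x ≤ a + b * Real.log x) :
    (1 - b / c) * x ≤ a + b * (Real.log c - 1) := by
  have linear_bound : x ≤ a + b * (Real.log c + x / c - 1) :=
    h.trans (by gcongr; exact log_le_log_add_div_sub_one hx hc)
  calc (1 - b / c) * x = x - b * (x / c) := by ring
    _ ≤ a + b * (Real.log c - 1) := by linarith

theorem implicit_log_bound_general {x a b : ℝ} (hx : 0 < x) (hb : 0 < b)
    (h : x ≤ a + b * Real.log x) :
    x ≤ 2 * a + 2 * b * Real.log b := by
  have half_le : (1 - b / (2 * b)) * x ≤ a + b * (Real.log (2 * b) - 1) :=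
    one_sub_div_mul_le_of_le_add_mul_log hx hb.le (by positivity) h
  have slope_eq : b / (2 * b) = 1 / 2 := by field_simp
  have log_two_mul_le : Real.log (2 * b) - 1 ≤ Real.log b := by
    rw [Real.log_mul two_ne_zero hb.ne']
    linarith [Real.log_two_lt_d9]
  calc x = 2 * ((1 - b / (2 * b)) * x) := by rw [slope_eq]; ring
    _ ≤ 2 * (a + b * (Real.log (2 * b) - 1)) := by gcongr
    _ ≤ 2 * (a + b * Real.log b) := by gcongr
    _ = 2 * a + 2 * b * Real.log b := by ring

/-- For `x, a, b > 0`, if `x ≤ a + b·log x` then `x ≤ 2a + 2b·log b`. -/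
theorem implicit_log_bound
    (x a b : ℝ) (hx : 0 < x) (ha : 0 < a) (hb : 0 < b)
    (h : x ≤ a + b * Real.log x) :
    x ≤ 2 * a + 2 * b * Real.log b :=
  implicit_log_bound_general hx hb h
end

section
/- Let d ≥ 1 and t be natural numbers, λ > 0 and L ≥ 0 reals, and let v_1, ..., v_t ∈ ℝ^d be vectors with Euclidean norm ‖v_i‖₂ ≤ L for each i. Let A = λ·I + ∑_{i=1}^t v_i v_iᵀ be the d×d real matrix formed from the identity and the outer products v_i v_iᵀ. Then det(A) ≤ (λ + t·L²/d)^d. -/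
theorem prod_le_sum_div_card_pow_card {ι : Type*} {s : Finset ι} (hs : s.Nonempty) {x : ι → ℝ}
    (hx : ∀ i ∈ s, 0 ≤ x i) : ∏ i ∈ s, x i ≤ ((∑ i ∈ s, x i) / s.card) ^ s.card := by
  have hprod : 0 ≤ ∏ i ∈ s, x i := Finset.prod_nonneg hx
  have amgm := Real.geom_mean_le_arith_mean s (fun _ ↦ 1) x (fun _ _ ↦ zero_le_one)
    (by simpa using hs) hx
  simp only [Real.rpow_one, Finset.sum_const, nsmul_eq_mul, mul_one, one_mul] at amgm
  calc ∏ i ∈ s, x i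
      = ((∏ i ∈ s, x i) ^ (s.card : ℝ)⁻¹) ^ s.card :=
        (Real.rpow_inv_natCast_pow hprod hs.card_ne_zero).symm
    _ ≤ ((∑ i ∈ s, x i) / s.card) ^ s.card := by gcongr

section

open scoped ComplexOrder

variable {𝕜 n ι : Type*} [RCLike 𝕜] [DecidableEq n]

theorem det_le_trace_div_card_pow_of_posSemidef [Fintype n] [Nonempty n] {A : Matrix n n 𝕜}
    (hA : A.PosSemidef) : A.det ≤ (A.trace / Fintype.card n) ^ Fintype.card n := by
  rw [hA.isHermitian.det_eq_prod_eigenvalues, hA.isHermitian.trace_eq_sum_eigenvalues]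
  exact_mod_cast prod_le_sum_div_card_pow_card Finset.univ_nonempty fun i _ ↦ hA.eigenvalues_nonneg i

variable [Fintype ι]

/-- The regularized design matrix `lam • 1 + ∑ i, v i (v i)ᴴ` of the least-squares estimator with
ridge parameter `lam` and covariates `v i`. The adjoint `(v i)ᴴ` makes it Hermitian over `ℂ` as well
as over `ℝ`. -/
def regularizedDesignMatrix (lam : ℝ) (v : ι → EuclideanSpace 𝕜 n) : Matrix n n 𝕜 :=
  (lam : 𝕜) • 1 + ∑ i, Matrix.vecMulVec (v i) (star ⇑(v i))

theorem posSemidef_regularizedDesignMatrix [Finite n] {lam : ℝ} (hlam : 0 ≤ lam)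
    (v : ι → EuclideanSpace 𝕜 n) : (regularizedDesignMatrix lam v).PosSemidef :=
  (Matrix.PosSemidef.one.smul (RCLike.ofReal_nonneg.mpr hlam)).add
    (Matrix.posSemidef_sum _ fun i _ ↦ Matrix.posSemidef_vecMulVec_self_star (v i))

variable [Fintype n]

theorem trace_regularizedDesignMatrix (lam : ℝ) (v : ι → EuclideanSpace 𝕜 n) :
    (regularizedDesignMatrix lam v).trace = ↑(lam * Fintype.card n + ∑ i, ‖v i‖ ^ 2) := by
  have trace_outer (i : ι) :
      (Matrix.vecMulVec (v i) (star ⇑(v i))).trace = ((‖v i‖ ^ 2 : ℝ) : 𝕜) := by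
    rw [Matrix.trace_vecMulVec, ← EuclideanSpace.inner_eq_star_dotProduct,
      inner_self_eq_norm_sq_to_K, RCLike.ofReal_pow]
  simp only [regularizedDesignMatrix, Matrix.trace_add, Matrix.trace_smul, Matrix.trace_one,
    Matrix.trace_sum, trace_outer, smul_eq_mul, RCLike.ofReal_add, RCLike.ofReal_mul,
    RCLike.ofReal_natCast, RCLike.ofReal_sum]

theorem det_design_matrix_bound_general [Nonempty n] {lam L : ℝ} (hlam : 0 ≤ lam)
    (v : ι → EuclideanSpace 𝕜 n) (hv : ∀ i, ‖v i‖ ≤ L) :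
    (regularizedDesignMatrix lam v).det ≤
      (((lam + Fintype.card ι * L ^ 2 / Fintype.card n) ^ Fintype.card n : ℝ) : 𝕜) := by
  have hsum : ∑ i, ‖v i‖ ^ 2 ≤ Fintype.card ι * L ^ 2 :=
    calc ∑ i, ‖v i‖ ^ 2 ≤ ∑ _i : ι, L ^ 2 := by gcongr with i; exact hv i
      _ = Fintype.card ι * L ^ 2 := by simp
  have hmean : (lam * Fintype.card n + ∑ i, ‖v i‖ ^ 2) / Fintype.card n ≤
      lam + Fintype.card ι * L ^ 2 / Fintype.card n := by
    rw [add_div, mul_div_cancel_right₀ lam (Nat.cast_ne_zero.mpr Fintype.card_ne_zero)]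
    gcongr
  calc (regularizedDesignMatrix lam v).det
      ≤ ((regularizedDesignMatrix lam v).trace / Fintype.card n) ^ Fintype.card n :=
        det_le_trace_div_card_pow_of_posSemidef (posSemidef_regularizedDesignMatrix hlam v)
    _ = (((lam * Fintype.card n + ∑ i, ‖v i‖ ^ 2) / Fintype.card n) ^ Fintype.card n : ℝ) := by
        rw [trace_regularizedDesignMatrix]
        norm_cast
    _ ≤ ((lam + Fintype.card ι * L ^ 2 / Fintype.card n) ^ Fintype.card n : ℝ) := by
        rw [RCLike.ofReal_le_ofReal]
        gcongr

end

/-- Determinant bound for the regularized design matrix: if each vector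
`v i ∈ ℝ^d` has Euclidean norm at most `L`, then
`det (λ·I + ∑ i, v i (v i)ᵀ) ≤ (λ + t·L²/d)^d`. -/
theorem det_design_matrix_bound
    (d t : ℕ) (hd : 1 ≤ d)
    (lam L : ℝ) (hlam : 0 < lam) (hL : 0 ≤ L)
    (v : Fin t → Fin d → ℝ)
    (hv : ∀ i, Real.sqrt (∑ j, (v i j) ^ 2) ≤ L)
    (A : Matrix (Fin d) (Fin d) ℝ)
    (hA : A = lam • (1 : Matrix (Fin d) (Fin d) ℝ) + ∑ i, Matrix.vecMulVec (v i) (v i)) :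
    A.det ≤ (lam + t * L ^ 2 / d) ^ d := by
  have : NeZero d := ⟨Nat.one_le_iff_ne_zero.mp hd⟩
  have hA_eq : A = regularizedDesignMatrix lam fun i ↦ WithLp.toLp 2 (v i) := by
    simp [hA, regularizedDesignMatrix]
  have hnorm (i : Fin t) : ‖WithLp.toLp 2 (v i)‖ ≤ L := by
    simpa [EuclideanSpace.norm_eq] using hv i
  simpa [hA_eq] using det_design_matrix_bound_general hlam.le _ hnorm
end

section
/- Let m, d ≥ 1 be natural numbers, let x_1, ..., x_m ∈ ℝ^d, and let w_1, ..., w_m ∈ ℝ with ρ := ∑_{a=1}^m |w_a| > 0. Set y = ∑_{a=1}^m w_a x_a, p_a = |w_a|/ρ, and M = ∑_{a=1}^m p_a x_a x_aᵀ. If the d×d matrix M is invertible, then yᵀ M^{−1} y ≤ ρ². -/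
open Matrix

/-!
If `M *ᵥ z = y`, then `y ⬝ᵥ z` is also the quadratic form of `M` at `z`, so
`y ⬝ᵥ z = 2 * (y ⬝ᵥ z) - (M *ᵥ z) ⬝ᵥ z = ∑ a, (2 * (w a * t a) - p a * t a ^ 2)`
with `t a = x a ⬝ᵥ z`. By AM-GM each summand is at most `w a ^ 2 / p a`, and for
`p a = |w a| / ρ` this is `ρ * |w a|`.
-/

section DesignMatrix

variable {ι n R : Type*} [Fintype ι] [Fintype n]

theorem sum_smul_dotProduct [CommSemiring R] (w : ι → R) (x : ι → n → R) (z : n → R) :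
    (∑ a, w a • x a) ⬝ᵥ z = ∑ a, w a * (x a ⬝ᵥ z) := by
  simp only [sum_dotProduct, smul_dotProduct, smul_eq_mul]

theorem sum_smul_vecMulVec_self_mulVec [CommSemiring R] (p : ι → R) (x : ι → n → R) (z : n → R) :
    (∑ a, p a • vecMulVec (x a) (x a)) *ᵥ z = ∑ a, (p a * (x a ⬝ᵥ z)) • x a := by
  simp only [sum_mulVec, smul_mulVec, vecMulVec_mulVec, op_smul_eq_smul, smul_smul]

theorem sum_smul_vecMulVec_self_mulVec_dotProduct [CommSemiring R]
    (p : ι → R) (x : ι → n → R) (z : n → R) :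
    ((∑ a, p a • vecMulVec (x a) (x a)) *ᵥ z) ⬝ᵥ z = ∑ a, p a * (x a ⬝ᵥ z) ^ 2 := by
  simp only [sum_smul_vecMulVec_self_mulVec, sum_smul_dotProduct, mul_assoc, sq]

/- The hypothesis `w a ^ 2 ≤ c a * p a` is the division-free form of `w a ^ 2 / p a ≤ c a`; it
forces `w a = 0` on arms with `p a = 0`. -/
theorem two_mul_sum_smul_dotProduct_le [CommRing R] [LinearOrder R] [IsStrictOrderedRing R]
    {w p c : ι → R} (hp : ∀ a, 0 ≤ p a) (hc : ∀ a, 0 ≤ c a) (hw : ∀ a, w a ^ 2 ≤ c a * p a)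
    (x : ι → n → R) (z : n → R) :
    2 * ((∑ a, w a • x a) ⬝ᵥ z) ≤
      ∑ a, c a + ((∑ a, p a • vecMulVec (x a) (x a)) *ᵥ z) ⬝ᵥ z := by
  rw [sum_smul_dotProduct, sum_smul_vecMulVec_self_mulVec_dotProduct, Finset.mul_sum,
    ← Finset.sum_add_distrib]
  refine Finset.sum_le_sum fun a _ ↦
    two_mul_le_add_of_sq_le_mul (hc a) (mul_nonneg (hp a) (sq_nonneg _)) ?_
  calc
    (w a * (x a ⬝ᵥ z)) ^ 2 = w a ^ 2 * (x a ⬝ᵥ z) ^ 2 := mul_pow ..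
    _ ≤ c a * p a * (x a ⬝ᵥ z) ^ 2 := mul_le_mul_of_nonneg_right (hw a) (sq_nonneg _)
    _ = c a * (p a * (x a ⬝ᵥ z) ^ 2) := mul_assoc ..

theorem sum_smul_dotProduct_le_of_mulVec_eq [CommRing R] [LinearOrder R] [IsStrictOrderedRing R]
    {w p c : ι → R} (hp : ∀ a, 0 ≤ p a) (hc : ∀ a, 0 ≤ c a) (hw : ∀ a, w a ^ 2 ≤ c a * p a)
    {x : ι → n → R} {z : n → R}
    (hz : (∑ a, p a • vecMulVec (x a) (x a)) *ᵥ z = ∑ a, w a • x a) :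
    (∑ a, w a • x a) ⬝ᵥ z ≤ ∑ a, c a := by
  have two_mul_le := two_mul_sum_smul_dotProduct_le hp hc hw x z
  rw [hz] at two_mul_le
  linarith

theorem allocation_mahalanobis_bound_general [Field R] [LinearOrder R] [IsStrictOrderedRing R]
    {x : ι → n → R} {w : ι → R} {ρ : R} (hρ : ρ = ∑ a, |w a|) (hρpos : 0 < ρ)
    {y : n → R} (hy : y = ∑ a, w a • x a)
    {p : ι → R} (hp : ∀ a, p a = |w a| / ρ)
    {M : Matrix n n R} (hM : M = ∑ a, p a • vecMulVec (x a) (x a))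
    {z : n → R} (hz : M *ᵥ z = y) :
    y ⬝ᵥ z ≤ ρ ^ 2 := by
  have p_nonneg (a : ι) : 0 ≤ p a := hp a ▸ div_nonneg (abs_nonneg _) hρpos.le
  have cost_nonneg (a : ι) : 0 ≤ ρ * |w a| := mul_nonneg hρpos.le (abs_nonneg _)
  have sq_eq_cost_mul (a : ι) : w a ^ 2 = ρ * |w a| * p a := by
    rw [hp, ← sq_abs]
    field_simp
  subst hy hM
  calc
    (∑ a, w a • x a) ⬝ᵥ z ≤ ∑ a, ρ * |w a| :=
      sum_smul_dotProduct_le_of_mulVec_eq p_nonneg cost_nonneg (fun a ↦ (sq_eq_cost_mul a).le) hz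
    _ = ρ ^ 2 := by rw [← Finset.mul_sum, ← hρ, sq]

end DesignMatrix

/-- Allocating samples proportionally to `|w a|`, where `y = ∑ w a • x a`,
makes the squared Mahalanobis norm of `y` with respect to
`M = ∑ (|w a|/ρ) • x a (x a)ᵀ` at most `ρ² = (∑ |w a|)²`. -/
theorem allocation_mahalanobis_bound
    (m d : ℕ) (hm : 1 ≤ m) (hd : 1 ≤ d)
    (x : Fin m → Fin d → ℝ)
    (w : Fin m → ℝ) (ρ : ℝ) (hρ : ρ = ∑ a, |w a|) (hρpos : 0 < ρ)
    (y : Fin d → ℝ) (hy : y = ∑ a, w a • x a)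
    (p : Fin m → ℝ) (hp : ∀ a, p a = |w a| / ρ)
    (M : Matrix (Fin d) (Fin d) ℝ)
    (hM : M = ∑ a, p a • Matrix.vecMulVec (x a) (x a))
    (hMinv : IsUnit M.det) :
    y ⬝ᵥ (M⁻¹ *ᵥ y) ≤ ρ ^ 2 :=
  allocation_mahalanobis_bound_general hρ hρpos hy hp hM <| by
    rw [mulVec_mulVec, mul_nonsing_inv M hMinv, one_mulVec]
end
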